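/- Fix an integer ℓ≥1 and define polynomials g_{ℓ,n}^m(q) for 0≤m≤n by g_{ℓ,n}^n(q) = [ℓ]_q[2ℓ]_q⋯[nℓ]_q and g_{ℓ,n}^m(q) = g_{ℓ,n}^{m+1}(q) − q^{ℓ(n−m−1)} g_{ℓ,n−1}^m(q) for 0≤m≤n−1 (this is the wreath-product q-analogue of Euler's difference table). Then every g_{ℓ,n}^m(q) is a polynomial in q with nonnegative integer coefficients. -/

import Mathlib

/-!
Re-index the table by `a m d = g_{ℓ,m+d}^m` and put `Q = q^ℓ`. The recurrence reads
`a m (d+1) = a (m+1) d - Q^d a m d`, and the diagonal values give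
`a (m+1) 0 = [ℓ(m+1)] a m 0`. By induction on `d` (`shift_identity`) one gets the subtraction-free
identity
`a (m+1) (d+1) = [ℓ(m+d+2)] a m (d+1) + Q^(m+d+1) [ℓ(d+1)] a m d`.
Substituting it into the recurrence expresses `a m (d+2)` through `a m (d+1)` and `a m d` with
coefficients `[ℓ(m+d+2)] - Q^(d+1)` and `Q^(m+d+1) [ℓ(d+1)]`. The first is nonnegative too, because
`q^(ℓ(d+1))` is one of the monomials of `[ℓ(m+d+2)]`; nonnegativity follows by two-step induction
on `d`.
-/

open Finset Polynomial

/-- The q-integer `[k]_q = 1 + q + ⋯ + q^{k-1}`. -/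
def qint {R : Type*} [CommSemiring R] (q : R) (k : ℕ) : R := ∑ i ∈ range k, q ^ i

theorem qint_add {R : Type*} [CommSemiring R] (q : R) (a b : ℕ) :
    qint q (a + b) = qint q a + q ^ a * qint q b := by
  simp only [qint, sum_range_add, pow_add, mul_sum]

/-- The semiring of integer polynomials with nonnegative coefficients, encoded as the image
of `ℕ[X]` in `ℤ[X]`. -/
noncomputable def nonnegPoly : Subsemiring (Polynomial ℤ) :=
  (Polynomial.mapRingHom (Nat.castRingHom ℤ)).rangeS

theorem coeff_nonneg_of_mem {p : Polynomial ℤ} (hp : p ∈ nonnegPoly) (k : ℕ) :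
    0 ≤ p.coeff k := by
  obtain ⟨r, rfl⟩ := hp
  simp

theorem X_pow_mem (k : ℕ) : (X : Polynomial ℤ) ^ k ∈ nonnegPoly :=
  ⟨X ^ k, by simp⟩

theorem qint_mem (k : ℕ) : qint (X : Polynomial ℤ) k ∈ nonnegPoly :=
  sum_mem fun i _ => X_pow_mem i

theorem qint_sub_mem {j N : ℕ} (h : j < N) :
    qint (X : Polynomial ℤ) N - X ^ j ∈ nonnegPoly := by
  have e : qint (X : Polynomial ℤ) N - X ^ j = ∑ i ∈ (range N).erase j, X ^ i := by
    rw [qint, ← sum_erase_add _ _ (mem_range.2 h), add_sub_cancel_right]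
  rw [e]
  exact sum_mem fun i _ => X_pow_mem i

/-- The subtraction-free relation between neighbouring columns of the re-indexed table. -/
theorem shift_identity (ℓ : ℕ) (a : ℕ → ℕ → Polynomial ℤ)
    (h0 : ∀ m, a (m + 1) 0 = qint X (ℓ * (m + 1)) * a m 0)
    (hr : ∀ m d, a m (d + 1) = a (m + 1) d - X ^ (ℓ * d) * a m d) (d : ℕ) :
    ∀ m, a (m + 1) (d + 1) = qint X (ℓ * (m + d + 2)) * a m (d + 1)
      + X ^ (ℓ * (m + d + 1)) * qint X (ℓ * (d + 1)) * a m d := by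
  induction d with
  | zero =>
    intro m
    have e : qint (X : Polynomial ℤ) (ℓ * (m + 2))
        = qint X (ℓ * (m + 1)) + X ^ (ℓ * (m + 1)) * qint X ℓ := by
      rw [← qint_add]; congr 1
    have h1 := hr (m + 1) 0
    have h2 := hr m 0
    rw [h0] at h1 h2
    rw [h0] at h1
    simp only [mul_zero, pow_zero, one_mul, zero_add, add_zero, mul_one, add_assoc,
      Nat.reduceAdd] at h1 h2 ⊢
    rw [h1, h2, e]
    ring
  | succ d ih =>
    intro m
    have e1 : qint (X : Polynomial ℤ) (ℓ * (m + d + 3))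
        = qint X (ℓ * (m + d + 2)) + X ^ (ℓ * (m + d + 2)) * qint X ℓ := by
      rw [← qint_add]; congr 1
    have e3 : qint (X : Polynomial ℤ) (ℓ * (d + 2))
        = qint X (ℓ * (d + 1)) + X ^ (ℓ * (d + 1)) * qint X ℓ := by
      rw [← qint_add]; congr 1
    have i1 := ih (m + 1)
    have i0 := ih m
    have r1 := hr (m + 1) (d + 1)
    have r2 := hr m (d + 1)
    have r3 := hr m d
    rw [show m + 1 + d + 2 = m + d + 3 by ring, show m + 1 + d + 1 = m + d + 2 by ring] at i1
    rw [show m + (d + 1) + 2 = m + d + 3 by ring, show m + (d + 1) + 1 = m + d + 2 by ring,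
      show d + 1 + 1 = d + 2 by ring] at *
    have p : (X : Polynomial ℤ) ^ (ℓ * (m + d + 2)) * X ^ (ℓ * d)
        = X ^ (ℓ * (d + 1)) * X ^ (ℓ * (m + d + 1)) := by
      rw [← pow_add, ← pow_add]; congr 1; ring
    linear_combination r1 + i1 - qint X (ℓ * (m + d + 3)) * r2
      - X ^ (ℓ * (m + d + 2)) * qint X (ℓ * (d + 1)) * r3
      - X ^ (ℓ * (d + 1)) * i0
      + X ^ (ℓ * (d + 1)) * a m (d + 1) * e1
      - X ^ (ℓ * (m + d + 2)) * a m (d + 1) * e3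
      + qint X (ℓ * (d + 1)) * a m d * p

theorem table_mem (ℓ : ℕ) (hℓ : 1 ≤ ℓ) (a : ℕ → ℕ → Polynomial ℤ)
    (h0 : ∀ m, a (m + 1) 0 = qint X (ℓ * (m + 1)) * a m 0)
    (hr : ∀ m d, a m (d + 1) = a (m + 1) d - X ^ (ℓ * d) * a m d)
    (hm : ∀ m, a m 0 ∈ nonnegPoly) (m d : ℕ) :
    a m d ∈ nonnegPoly := by
  induction d using Nat.twoStepInduction with
  | zero => exact hm m
  | one =>
    have e : a m 1 = (qint X (ℓ * (m + 1)) - X ^ 0) * a m 0 := by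
      rw [hr m 0, h0]; simp only [mul_zero]; ring
    rw [e]
    exact mul_mem (qint_sub_mem (by positivity)) (hm m)
  | more d ih0 ih1 =>
    have e : a m (d + 2) = (qint X (ℓ * (m + d + 2)) - X ^ (ℓ * (d + 1))) * a m (d + 1)
        + X ^ (ℓ * (m + d + 1)) * qint X (ℓ * (d + 1)) * a m d := by
      rw [hr m (d + 1), shift_identity ℓ a h0 hr]; ring
    rw [e]
    exact add_mem (mul_mem (qint_sub_mem (Nat.mul_lt_mul_of_pos_left (by omega) hℓ)) ih1)
      (mul_mem (mul_mem (X_pow_mem _) (qint_mem _)) ih0)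

/-- If the wreath-product q-Euler difference table `G n m = g_{ℓ,n}^m(q)` is
defined by the diagonal values `g_{ℓ,n}^n(q) = [ℓ]_q[2ℓ]_q⋯[nℓ]_q` and the recurrence
`g_{ℓ,n}^m(q) = g_{ℓ,n}^{m+1}(q) − q^{ℓ(n−m−1)} g_{ℓ,n−1}^m(q)` for `0 ≤ m ≤ n−1`,
then each `g_{ℓ,n}^m(q)` (for `m ≤ n`) has nonnegative integer coefficients. -/
theorem q_difference_table_nonneg_coefficients (ℓ : ℕ) (hℓ : 1 ≤ ℓ)
    (G : ℕ → ℕ → Polynomial ℤ)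
    (hdiag : ∀ n, G n n = ∏ j ∈ Icc 1 n, qint (X : Polynomial ℤ) (j * ℓ))
    (hrec : ∀ n m, m < n →
      G n m = G n (m + 1) - (X : Polynomial ℤ) ^ (ℓ * (n - m - 1)) * G (n - 1) m) :
    ∀ n m, m ≤ n → ∀ k, 0 ≤ (G n m).coeff k := by
  intro n m hmn
  obtain ⟨d, rfl⟩ := Nat.exists_eq_add_of_le hmn
  refine coeff_nonneg_of_mem (table_mem ℓ hℓ (fun m d => G (m + d) m) ?_ ?_ ?_ m d)
  · intro m
    simp only [add_zero, hdiag]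
    rw [prod_Icc_succ_top (by omega), mul_comm, mul_comm ℓ]
  · intro m d
    have h := hrec (m + (d + 1)) m (by omega)
    rw [show m + (d + 1) - m - 1 = d by omega, show m + (d + 1) - 1 = m + d by omega] at h
    simpa only [add_assoc, add_comm, add_left_comm] using h
  · intro m
    simp only [add_zero, hdiag]
    exact prod_mem fun j _ => qint_mem _
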